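/- arXiv:1808.03613 — 2 statements merged into one kernel-verified Lean document; each statement's English description precedes it below -/
import Mathlib

section
/- Let q be a prime power, F_q a finite field with q elements, let h ≥ 1, K ≥ 1 and N_1, …, N_h ≥ K be integers, and ε_1, …, ε_h ∈ [0,1]. Consider the h-hop tandem network: node 0 draws a uniformly random N_1×K matrix C over F_q; for each hop i = 1, …, h, node i receives each of node (i−1)'s N_i packets independently with probability 1−ε_i, and (for i < h) node i recodes its received packets by applying an independent uniformly random N_{i+1}×(number of received packets) matrix over F_q to the received coefficient rows. Then the probability that the coefficient matrix held by node h (the received rows at the last hop) has rank K equals ∏_{i=1}^{h} [∑_{m=K}^{N_i} B(m, N_i, ε_i) P(m, K)]. -/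
open Finset

/-- `P(m,K) = ∏_{i=0}^{K-1} (1 - q^{i-m})`. -/
noncomputable def Pfr (q m K : ℕ) : ℝ :=
  ∏ i ∈ Finset.range K, (1 - (q : ℝ) ^ ((i : ℤ) - (m : ℤ)))

/-- Binomial probability `B(m,N,ε) = C(N,m) (1-ε)^m ε^{N-m}`. -/
noncomputable def Bpmf (m N : ℕ) (ε : ℝ) : ℝ :=
  (N.choose m : ℝ) * (1 - ε) ^ m * ε ^ (N - m)

/-- Replace the rows not received (pattern `f`) by zero rows; multiplying a recoding
matrix by this zeroed matrix is the same as multiplying the submatrix of the recoding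
matrix consisting of the columns of received packets by the received rows. -/
def zeroRows {F : Type} [Field F] {n K : ℕ} (f : Fin n → Bool)
    (M : Matrix (Fin n) (Fin K) F) : Matrix (Fin n) (Fin K) F :=
  Matrix.of fun i k => if f i then M i k else 0

/-- The coefficient matrix transmitted over hop `t` (0-indexed): `held ... 0 = C` and
`held ... (t+1) = G t * zeroRows (f t) (held ... t)`, i.e. node `t+1` recodes the
packets it received over hop `t` with the uniformly random matrix `G t`. -/
def held {F : Type} [Field F] (K : ℕ) (N : ℕ → ℕ)
    (C : Matrix (Fin (N 0)) (Fin K) F)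
    (f : (i : ℕ) → Fin (N i) → Bool)
    (G : (i : ℕ) → Matrix (Fin (N (i + 1))) (Fin (N i)) F) :
    (t : ℕ) → Matrix (Fin (N t)) (Fin K) F
  | 0 => C
  | (t + 1) => G t * zeroRows (f t) (held K N C f G t)

/-!
Let a matrix be *full* if its rank is its number of columns `K`. Left multiplication by a full
matrix is a surjective homomorphism, so it maps the uniform distribution to the uniform one:
whenever the received rows are full, recoding makes the next transmitted matrix uniform again, no
matter what was received. Whenever they are not full, no later matrix is full. Hence on functions
vanishing at non-full matrices, the expectation over the matrix held after `n` hops is the uniform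
expectation times a product of one factor per hop, the probability that the received rows of a
uniform matrix are full. For independent erasures the number `m` of received rows is binomial, and
the `m` rows are full with probability `P(m, K)`.
-/

open scoped BigOperators Matrix

section UniformMatrix

lemma expect_comp_addMonoidHom {A B M : Type*} [AddGroup A] [Fintype A] [AddGroup B] [Fintype B]
    [AddCommMonoid M] [Module ℚ≥0 M] (g : A →+ B) (hg : Function.Surjective g) (φ : B → M) :
    𝔼 a, φ (g a) = 𝔼 b, φ b := by
  classical
  have card_fiber (b : B) : #{a | g a = b} = #{a | g a = 0} :=
    AddMonoidHom.card_fiber_eq_of_mem_range g (hg b) (hg 0)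
  have card_eq : Fintype.card A = Fintype.card B * #{a | g a = 0} := by
    rw [← card_univ, card_eq_sum_card_fiberwise (f := g) (t := univ) (by simp)]
    simp only [card_fiber, sum_const, card_univ, smul_eq_mul]
  have sum_eq : ∑ a, φ (g a) = (#{a | g a = 0} : ℚ≥0) • ∑ b, φ b := by
    rw [← sum_fiberwise' univ g φ, smul_sum]
    simp only [sum_const, card_fiber, Nat.cast_smul_eq_nsmul]
  have ker_card_ne_zero : (#{a | g a = 0} : ℚ≥0) ≠ 0 :=
    Nat.cast_ne_zero.2 (card_ne_zero_of_mem (a := 0) (by simp))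
  rw [expect_univ, expect_univ, sum_eq, smul_smul, card_eq, Nat.cast_mul, mul_inv, mul_assoc,
    inv_mul_cancel₀ ker_card_ne_zero, mul_one]

variable {F ι κ : Type*} [Field F] [Fintype κ]

lemma rank_eq_card_iff_linearIndependent_col (A : Matrix ι κ F) :
    A.rank = Fintype.card κ ↔ LinearIndependent F A.col := by
  rw [linearIndependent_iff_card_eq_finrank_span, Matrix.rank_eq_finrank_span_cols, eq_comm,
    Set.finrank]

lemma exists_mul_eq_one_of_rank_eq_card [Fintype ι] [DecidableEq κ] {A : Matrix ι κ F}
    (hA : A.rank = Fintype.card κ) : ∃ B : Matrix κ ι F, B * A = 1 := by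
  have range_eq_top : LinearMap.range Aᵀ.mulVecLin = ⊤ :=
    Submodule.eq_top_of_finrank_eq
      (by rw [Module.finrank_fintype_fun_eq_card, ← hA, ← A.rank_transpose, Matrix.rank])
  refine Matrix.vecMul_surjective_iff_exists_left_inverse.1 fun v => ?_
  obtain ⟨w, hw⟩ := LinearMap.range_eq_top.1 range_eq_top v
  exact ⟨w, (A.mulVec_transpose w).symm.trans hw⟩

variable [Fintype F]

lemma expect_mul_of_rank_eq_card {μ M : Type*} [Fintype μ] [DecidableEq μ] [Fintype ι]
    [DecidableEq ι] [DecidableEq κ] [AddCommMonoid M] [Module ℚ≥0 M] {A : Matrix ι κ F}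
    (hA : A.rank = Fintype.card κ) (φ : Matrix μ κ F → M) :
    𝔼 G : Matrix μ ι F, φ (G * A) = 𝔼 D, φ D := by
  obtain ⟨B, hB⟩ := exists_mul_eq_one_of_rank_eq_card hA
  exact expect_comp_addMonoidHom (Matrix.addMonoidHomMulRight A)
    (fun D => ⟨D * B, (Matrix.mul_assoc D B A).trans (by rw [hB, Matrix.mul_one])⟩) φ

lemma expect_submatrix_rows {ι' M : Type*} [Fintype ι] [DecidableEq ι] [Fintype ι']
    [DecidableEq ι'] [DecidableEq κ] [AddCommMonoid M] [Module ℚ≥0 M] {r : ι' → ι}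
    (hr : Function.Injective r) (φ : Matrix ι' κ F → M) :
    𝔼 C : Matrix ι κ F, φ (C.submatrix r id) = 𝔼 D, φ D :=
  expect_comp_addMonoidHom (A := Matrix ι κ F) (B := Matrix ι' κ F)
    ⟨⟨fun C => C.submatrix r id, rfl⟩, fun _ _ => rfl⟩ hr.surjective_comp_right φ

lemma card_rank_eq [Fintype ι] [DecidableEq ι] {K : ℕ} (hK : K ≤ Fintype.card ι) :
    #{C : Matrix ι (Fin K) F | C.rank = K} =
      ∏ i : Fin K, (Fintype.card F ^ Fintype.card ι - Fintype.card F ^ (i : ℕ)) := by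
  have card_families := card_linearIndependent (K := F) (V := ι → F) (k := K) (by simpa using hK)
  have rank_eq_iff (C : Matrix ι (Fin K) F) : C.rank = K ↔ LinearIndependent F C.col := by
    rw [← rank_eq_card_iff_linearIndependent_col, Fintype.card_fin]
  rw [Module.finrank_fintype_fun_eq_card] at card_families
  rw [← card_families, ← Fintype.card_subtype, ← Nat.card_eq_fintype_card]
  exact Nat.card_congr
    ((Matrix.transposeAddEquiv ι (Fin K) F).toEquiv.subtypeEquiv rank_eq_iff)

lemma Pfr_eq_zero_of_lt {q m K : ℕ} (hm : m < K) : Pfr q m K = 0 :=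
  prod_eq_zero (mem_range.2 hm) (by simp)

lemma expect_rank_eq [Fintype ι] [DecidableEq ι] (K : ℕ) :
    𝔼 C : Matrix ι (Fin K) F, (if C.rank = K then 1 else 0 : ℝ) =
      Pfr (Fintype.card F) (Fintype.card ι) K := by
  rcases lt_or_ge (Fintype.card ι) K with hlt | hK
  · rw [Pfr_eq_zero_of_lt hlt]
    exact expect_eq_zero fun C _ => if_neg (C.rank_le_card_height.trans_lt hlt).ne
  have hq : (Fintype.card F : ℝ) ≠ 0 := Nat.cast_ne_zero.2 Fintype.card_ne_zero
  have card_matrices : (Fintype.card (Matrix ι (Fin K) F) : ℝ) =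
      ∏ _i : Fin K, (Fintype.card F : ℝ) ^ Fintype.card ι := by
    rw [← Nat.card_eq_fintype_card]
    simp [Matrix, ← pow_mul, mul_comm]
  rw [Fintype.expect_eq_sum_div_card, sum_boole, card_rank_eq hK, card_matrices, Nat.cast_prod,
    ← prod_div_distrib, Pfr, ← Fin.prod_univ_eq_prod_range
      (fun i => 1 - (Fintype.card F : ℝ) ^ ((i : ℤ) - (Fintype.card ι : ℤ)))]
  refine prod_congr rfl fun i _ => ?_
  rw [Nat.cast_sub (Nat.pow_le_pow_right Fintype.card_pos (i.2.le.trans hK)), Nat.cast_pow,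
    Nat.cast_pow, sub_div, div_self (pow_ne_zero _ hq), zpow_sub₀ hq, zpow_natCast, zpow_natCast]

end UniformMatrix

section Hop

variable {F : Type} [Field F] {n K : ℕ}

lemma rank_zeroRows (f : Fin n → Bool) (M : Matrix (Fin n) (Fin K) F) :
    (zeroRows f M).rank =
      (M.submatrix (fun j : {j // f j = true} => (j : Fin n)) id).rank := by
  have row_of_received {j : Fin n} (hj : f j = true) : (zeroRows f M).row j = M.row j := by
    ext k
    exact if_pos hj
  have row_of_erased {j : Fin n} (hj : ¬ f j = true) : (zeroRows f M).row j = 0 := by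
    ext k
    exact if_neg hj
  suffices span_eq : Submodule.span F (Set.range (zeroRows f M).row) = Submodule.span F
      (Set.range (M.submatrix (fun j : {j // f j = true} => (j : Fin n)) id).row) by
    rw [Matrix.rank_eq_finrank_span_row, Matrix.rank_eq_finrank_span_row, span_eq]
  refine le_antisymm (Submodule.span_le.2 ?_) (Submodule.span_mono ?_)
  · rintro _ ⟨j, rfl⟩
    by_cases hj : f j = true
    · exact Submodule.subset_span ⟨⟨j, hj⟩, (row_of_received hj).symm⟩
    · exact row_of_erased hj ▸ Submodule.zero_mem _
  · rintro _ ⟨j, rfl⟩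
    exact ⟨j, row_of_received j.2⟩

lemma rank_zeroRows_le (f : Fin n → Bool) (M : Matrix (Fin n) (Fin K) F) :
    (zeroRows f M).rank ≤ M.rank :=
  rank_zeroRows f M ▸ M.rank_submatrix_le _ _

/-- The probability that the received rows of `M` have full column rank, when `p f` is the
probability of the reception pattern `f`. -/
noncomputable def decodeProb (p : (Fin n → Bool) → ℝ) (M : Matrix (Fin n) (Fin K) F) : ℝ :=
  ∑ f, p f * if (zeroRows f M).rank = K then 1 else 0

lemma decodeProb_eq_zero (p : (Fin n → Bool) → ℝ) {M : Matrix (Fin n) (Fin K) F}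
    (hM : M.rank ≠ K) : decodeProb p M = 0 :=
  sum_eq_zero fun f _ => by
    rw [if_neg, mul_zero]
    exact fun hf => hM (M.rank_le_width.antisymm (hf.ge.trans (rank_zeroRows_le f M)))

variable [Fintype F]

lemma expect_decodeProb (p : (Fin n → Bool) → ℝ) :
    𝔼 C : Matrix (Fin n) (Fin K) F, decodeProb p C =
      ∑ f, p f * Pfr (Fintype.card F) #{j | f j} K := by
  simp only [decodeProb, expect_sum_comm, ← mul_expect, rank_zeroRows]
  refine sum_congr rfl fun f _ => ?_
  rw [expect_submatrix_rows Subtype.val_injective fun D => if D.rank = K then (1 : ℝ) else 0,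
    expect_rank_eq, Fintype.card_subtype]

lemma sum_expect_recode_zeroRows {m : ℕ} (p : (Fin n → Bool) → ℝ)
    {φ : Matrix (Fin m) (Fin K) F → ℝ} (hφ : ∀ D, D.rank ≠ K → φ D = 0)
    (M : Matrix (Fin n) (Fin K) F) :
    ∑ f, p f * 𝔼 G : Matrix (Fin m) (Fin n) F, φ (G * zeroRows f M) =
      decodeProb p M * 𝔼 D, φ D := by
  rw [decodeProb, sum_mul]
  refine sum_congr rfl fun f _ => ?_
  split_ifs with hf
  · rw [expect_mul_of_rank_eq_card (by rwa [Fintype.card_fin]), mul_one]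
  · rw [mul_zero, zero_mul, expect_eq_zero, mul_zero]
    intro G _
    have hle := Matrix.rank_mul_le_right G (zeroRows f M)
    exact hφ _ fun hG => hf ((zeroRows f M).rank_le_width.antisymm (hG.ge.trans hle))

end Hop

section Trajectory

variable {α : ℕ → Type*} {n : ℕ}

/-- The sequence that starts with the `n` terms of `x` and continues with those of the default
sequence `d`. -/
def finExtend (d : ∀ i, α i) (x : ∀ i : Fin n, α i) (i : ℕ) : α i :=
  if hi : i < n then x ⟨i, hi⟩ else d i

lemma finExtend_snoc (d : ∀ i, α i) (x : ∀ i : Fin n, α i) (y : α n) :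
    finExtend (n := n + 1) d (Fin.snoc (α := fun i => α i) x y) =
      Function.update (finExtend d x) n y := by
  ext i
  rcases lt_trichotomy i n with hi | rfl | hi
  · rw [Function.update_of_ne hi.ne]
    simp [finExtend, Fin.snoc, hi, hi.trans (Nat.lt_succ_self n)]
  · simp [finExtend, Fin.snoc]
  · rw [Function.update_of_ne hi.ne']
    simp [finExtend, hi.not_gt, Nat.not_lt.2 hi]

lemma sum_pi_fin_snoc {β : Fin (n + 1) → Type*} [∀ i, Fintype (β i)] {M : Type*} [AddCommMonoid M]
    (X : (∀ i, β i) → M) :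
    ∑ x, X x = ∑ x : ∀ i : Fin n, β i.castSucc, ∑ y, X (Fin.snoc x y) := by
  rw [← (Fin.snocEquiv β).sum_comp, Fintype.sum_prod_type_right]
  rfl

lemma expect_pi_fin_snoc {β : Fin (n + 1) → Type*} [∀ i, Fintype (β i)] {M : Type*}
    [AddCommMonoid M] [Module ℚ≥0 M] (X : (∀ i, β i) → M) :
    𝔼 x, X x = 𝔼 x : ∀ i : Fin n, β i.castSucc, 𝔼 y, X (Fin.snoc x y) := by
  rw [← Fintype.expect_equiv (Fin.snocEquiv β) _ X fun _ => rfl, ← univ_product_univ,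
    expect_product, expect_comm]
  rfl

variable {F : Type} [Field F] {K : ℕ} {N : ℕ → ℕ}

lemma held_congr {C : Matrix (Fin (N 0)) (Fin K) F} {f f' : ∀ i, Fin (N i) → Bool}
    {G G' : ∀ i, Matrix (Fin (N (i + 1))) (Fin (N i)) F} {t : ℕ} (hf : ∀ i < t, f i = f' i)
    (hG : ∀ i < t, G i = G' i) : held K N C f G t = held K N C f' G' t := by
  induction t with
  | zero => rfl
  | succ t ih =>
    rw [held, held, hf t t.lt_succ_self, hG t t.lt_succ_self,
      ih (fun i hi => hf i (hi.trans t.lt_succ_self)) fun i hi => hG i (hi.trans t.lt_succ_self)]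

lemma held_update (C : Matrix (Fin (N 0)) (Fin K) F) (f : ∀ i, Fin (N i) → Bool)
    (G : ∀ i, Matrix (Fin (N (i + 1))) (Fin (N i)) F) (t : ℕ) (x : Fin (N t) → Bool)
    (Y : Matrix (Fin (N (t + 1))) (Fin (N t)) F) :
    held K N C (Function.update f t x) (Function.update G t Y) t = held K N C f G t :=
  held_congr (fun _ hi => Function.update_of_ne hi.ne _ _)
    fun _ hi => Function.update_of_ne hi.ne _ _

variable [Fintype F]

/-- The expectation of `X` over a run of the first `n` hops: the source and recoding matrices are
uniform, and the pattern `f` is received over hop `i` with probability `p i f`, all independently.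
The variable `X` sees sequences indexed by all hops, in which the later ones are filled in by total
reception and zero matrices; this is the convention of `tandem_decoding_prob`. -/
noncomputable def tandemExpect (p : ∀ i, (Fin (N i) → Bool) → ℝ) (n : ℕ)
    (X : Matrix (Fin (N 0)) (Fin K) F → (∀ i, Fin (N i) → Bool) →
      (∀ i, Matrix (Fin (N (i + 1))) (Fin (N i)) F) → ℝ) : ℝ :=
  𝔼 C, ∑ f : ∀ i : Fin n, Fin (N i) → Bool, (∏ i : Fin n, p i (f i)) *
    𝔼 G : ∀ i : Fin n, Matrix (Fin (N (i + 1))) (Fin (N i)) F,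
      X C (finExtend (fun _ _ => true) f) (finExtend (fun _ => 0) G)

lemma tandemExpect_succ (p : ∀ i, (Fin (N i) → Bool) → ℝ) (n : ℕ)
    (X : Matrix (Fin (N 0)) (Fin K) F → (∀ i, Fin (N i) → Bool) →
      (∀ i, Matrix (Fin (N (i + 1))) (Fin (N i)) F) → ℝ) :
    tandemExpect p (n + 1) X = tandemExpect p n fun C f G =>
      ∑ x, p n x * 𝔼 Y, X C (Function.update f n x) (Function.update G n Y) := by
  refine expect_congr rfl fun C _ => ?_
  rw [sum_pi_fin_snoc]
  refine sum_congr rfl fun f _ => ?_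
  rw [expect_sum_comm, mul_sum]
  refine sum_congr rfl fun x _ => ?_
  rw [expect_pi_fin_snoc, Fin.prod_univ_castSucc, ← mul_expect, ← mul_assoc]
  simp only [Fin.snoc_castSucc, Fin.snoc_last]
  congr 1
  exact expect_congr rfl fun G _ => expect_congr rfl fun Y _ =>
    congrArg₂ (X C) (finExtend_snoc (α := fun i => Fin (N i) → Bool) _ f x)
      (finExtend_snoc (α := fun i => Matrix (Fin (N (i + 1))) (Fin (N i)) F) _ G Y)

lemma sum_eq_tandemExpect (p : ∀ i, (Fin (N i) → Bool) → ℝ) (n : ℕ)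
    (X : Matrix (Fin (N 0)) (Fin K) F → (∀ i, Fin (N i) → Bool) →
      (∀ i, Matrix (Fin (N (i + 1))) (Fin (N i)) F) → ℝ) :
    ∑ ω : Matrix (Fin (N 0)) (Fin K) F × ((i : Fin n) → Fin (N i) → Bool) ×
        ((i : Fin n) → Matrix (Fin (N (i + 1))) (Fin (N i)) F),
      (Fintype.card (Matrix (Fin (N 0)) (Fin K) F) : ℝ)⁻¹ *
        (∏ i : Fin n, (Fintype.card (Matrix (Fin (N (i + 1))) (Fin (N i)) F) : ℝ)⁻¹) *
        (∏ i : Fin n, p i (ω.2.1 i)) *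
        X ω.1 (finExtend (fun _ _ => true) ω.2.1) (finExtend (fun _ => 0) ω.2.2) =
      tandemExpect p n X := by
  have card_recodings : ∏ i : Fin n,
      (Fintype.card (Matrix (Fin (N (i + 1))) (Fin (N i)) F) : ℝ)⁻¹ =
        (Fintype.card (∀ i : Fin n, Matrix (Fin (N (i + 1))) (Fin (N i)) F) : ℝ)⁻¹ := by
    rw [prod_inv_distrib, Fintype.card_pi, Nat.cast_prod]
  simp only [tandemExpect, card_recodings, Fintype.expect_eq_sum_div_card, div_eq_inv_mul,
    Fintype.sum_prod_type, mul_sum]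
  exact sum_congr rfl fun C _ => sum_congr rfl fun f _ => sum_congr rfl fun G _ => by ring

lemma tandemExpect_held (p : ∀ i, (Fin (N i) → Bool) → ℝ) (n : ℕ)
    {φ : Matrix (Fin (N n)) (Fin K) F → ℝ} (hφ : ∀ D, D.rank ≠ K → φ D = 0) :
    tandemExpect p n (fun C f G => φ (held K N C f G n)) =
      (∏ i ∈ range n, ∑ f, p i f * Pfr (Fintype.card F) #{j | f j} K) * 𝔼 D, φ D := by
  induction n with
  | zero => simp [tandemExpect, held]
  | succ n ih =>
    rw [tandemExpect_succ]
    simp only [held, Function.update_self, held_update, sum_expect_recode_zeroRows (p n) hφ]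
    rw [ih (φ := fun M => decodeProb (p n) M * 𝔼 D, φ D) fun M hM => by
        rw [decodeProb_eq_zero _ hM, zero_mul],
      ← expect_mul, expect_decodeProb, prod_range_succ, mul_assoc]

lemma tandemExpect_rank_received (p : ∀ i, (Fin (N i) → Bool) → ℝ) (n : ℕ) :
    tandemExpect (F := F) p (n + 1)
        (fun C f G => if (zeroRows (f n) (held K N C f G n)).rank = K then 1 else 0) =
      ∏ i ∈ range (n + 1), ∑ f, p i f * Pfr (Fintype.card F) #{j | f j} K := by
  rw [tandemExpect_succ]
  simp only [Function.update_self, held_update, Fintype.expect_const]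
  exact (tandemExpect_held p n fun _ => decodeProb_eq_zero (p n)).trans
    (by rw [expect_decodeProb, prod_range_succ])

end Trajectory

section Erasure

variable {ι : Type*} [Fintype ι]

lemma prod_ite_eq_pow_card {R : Type*} [CommMonoid R] (f : ι → Bool) (a b : R) :
    ∏ j, (if f j then a else b) =
      a ^ #{j | f j} * b ^ (Fintype.card ι - #{j | f j}) := by
  classical
  rw [prod_ite, prod_const, prod_const, ← compl_filter, card_compl]

lemma sum_bernoulli_mul_card [DecidableEq ι] (ε : ℝ) (φ : ℕ → ℝ) :
    ∑ f : ι → Bool, (∏ j, if f j then 1 - ε else ε) * φ #{j | f j} =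
      ∑ m ∈ range (Fintype.card ι + 1), Bpmf m (Fintype.card ι) ε * φ m := by
  have filter_bijective :
      Function.Bijective fun f : ι → Bool => ({j | f j} : Finset ι) :=
    ⟨fun f g hfg => funext fun j => Bool.eq_iff_iff.2 (by simpa using Finset.ext_iff.1 hfg j),
      fun s => ⟨fun j => decide (j ∈ s), by simp⟩⟩
  calc ∑ f : ι → Bool, (∏ j, if f j then 1 - ε else ε) * φ #{j | f j}
      = ∑ s : Finset ι, (1 - ε) ^ #s * ε ^ (Fintype.card ι - #s) * φ #s :=
        Fintype.sum_bijective _ filter_bijective _ _ fun f => by rw [prod_ite_eq_pow_card]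
    _ = ∑ m ∈ range (Fintype.card ι + 1), (Fintype.card ι).choose m •
          ((1 - ε) ^ m * ε ^ (Fintype.card ι - m) * φ m) := by
        rw [← powerset_univ, ← card_univ, ← sum_powerset_apply_card
          fun m => (1 - ε) ^ m * ε ^ (#(univ : Finset ι) - m) * φ m]
    _ = ∑ m ∈ range (Fintype.card ι + 1), Bpmf m (Fintype.card ι) ε * φ m := by
        simp only [Bpmf, nsmul_eq_mul, mul_assoc]

lemma sum_bernoulli_mul_Pfr (q K n : ℕ) (ε : ℝ) :
    ∑ f : Fin n → Bool, (∏ j, if f j then 1 - ε else ε) * Pfr q #{j | f j} K =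
      ∑ m ∈ Icc K n, Bpmf m n ε * Pfr q m K := by
  rw [sum_bernoulli_mul_card ε fun m => Pfr q m K, Fintype.card_fin]
  refine (sum_subset (fun m hm => ?_) fun m hm hm' => ?_).symm
  · exact mem_range_succ_iff.2 (mem_Icc.1 hm).2
  · have hlt : m < K := by simpa [mem_range_succ_iff.1 hm] using hm'
    rw [Pfr_eq_zero_of_lt hlt, mul_zero]

end Erasure

theorem tandem_decoding_prob_general (F : Type) [Field F] [Fintype F] (h K : ℕ) (hh : 1 ≤ h)
    (N : ℕ → ℕ) (p : (i : ℕ) → (Fin (N i) → Bool) → ℝ) :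
    ∑ ω ∈ Finset.univ.filter
        (fun ω : Matrix (Fin (N 0)) (Fin K) F × ((i : Fin h) → Fin (N i.1) → Bool) ×
            ((i : Fin h) → Matrix (Fin (N (i.1 + 1))) (Fin (N i.1)) F) =>
          (((held K N ω.1
                (fun i => if hi : i < h then ω.2.1 ⟨i, hi⟩ else fun _ => true)
                (fun i => if hi : i < h then ω.2.2 ⟨i, hi⟩ else 0)
                (h - 1)).submatrix
              (fun j : {j : Fin (N (h - 1)) //
                  (if hi : h - 1 < h then ω.2.1 ⟨h - 1, hi⟩ else fun _ => true) j = true} =>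
                (j : Fin (N (h - 1)))) id).rank = K)),
      ((Fintype.card (Matrix (Fin (N 0)) (Fin K) F) : ℝ))⁻¹ *
      (∏ i : Fin h, ((Fintype.card (Matrix (Fin (N (i.1 + 1))) (Fin (N i.1)) F) : ℝ))⁻¹) *
      (∏ i : Fin h, p i (ω.2.1 i)) =
    ∏ i ∈ Finset.range h, ∑ f, p i f * Pfr (Fintype.card F) #{j | f j} K := by
  obtain ⟨n, rfl⟩ := Nat.exists_eq_add_of_le' hh
  rw [← tandemExpect_rank_received, ← sum_eq_tandemExpect, sum_filter]
  simp only [rank_zeroRows, mul_ite, mul_one, mul_zero]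
  rfl

/-- the `h`-hop tandem network. Hop `i` (0-indexed, `i = 0, …, h-1`)
carries `N i` coded packets, each received with probability `1 - ε i`; the source
matrix `C` is uniformly random `N 0 × K`; intermediate node `i+1` recodes with an
independent uniformly random matrix `G i` (realised as a uniformly random
`N (i+1) × N i` matrix applied to the received rows, which is equivalent to applying
a uniformly random `N (i+1) × |received|` matrix). The probability that the matrix of
received rows at the last node has rank `K` equals
`∏_{i=0}^{h-1} [∑_{m=K}^{N i} B(m, N i, ε i) P(m,K)]`. -/
theorem tandem_decoding_prob (q : ℕ) (F : Type) [Field F] [Fintype F] [DecidableEq F]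
    (hF : Fintype.card F = q) (h K : ℕ) (hh : 1 ≤ h) (hK : 1 ≤ K)
    (N : ℕ → ℕ) (hN : ∀ i < h, K ≤ N i)
    (ε : ℕ → ℝ) (hε : ∀ i < h, 0 ≤ ε i ∧ ε i ≤ 1) :
    ∑ ω ∈ Finset.univ.filter
        (fun ω : Matrix (Fin (N 0)) (Fin K) F × ((i : Fin h) → Fin (N i.1) → Bool) ×
            ((i : Fin h) → Matrix (Fin (N (i.1 + 1))) (Fin (N i.1)) F) =>
          (((held K N ω.1
                (fun i => if hi : i < h then ω.2.1 ⟨i, hi⟩ else fun _ => true)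
                (fun i => if hi : i < h then ω.2.2 ⟨i, hi⟩ else 0)
                (h - 1)).submatrix
              (fun j : {j : Fin (N (h - 1)) //
                  (if hi : h - 1 < h then ω.2.1 ⟨h - 1, hi⟩ else fun _ => true) j = true} =>
                (j : Fin (N (h - 1)))) id).rank = K)),
      ((Fintype.card (Matrix (Fin (N 0)) (Fin K) F) : ℝ))⁻¹ *
      (∏ i : Fin h, ((Fintype.card (Matrix (Fin (N (i.1 + 1))) (Fin (N i.1)) F) : ℝ))⁻¹) *
      (∏ i : Fin h, ∏ j : Fin (N i.1), (if ω.2.1 i j then (1 - ε i.1) else ε i.1)) =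
    ∏ i ∈ Finset.range h, (∑ m ∈ Finset.Icc K (N i), Bpmf m (N i) (ε i) * Pfr q m K) := by
  subst hF
  rw [tandem_decoding_prob_general F h K hh N fun i f => ∏ j, if f j then 1 - ε i else ε i]
  exact prod_congr rfl fun i _ => sum_bernoulli_mul_Pfr _ K (N i) (ε i)
end

section
/- Let q be a prime power, F_q a finite field with q elements, and let K ≥ 1, N_S, N_R ≥ 0, L ≥ 1 be integers. Fix subsets A_1, …, A_L ⊆ {1,…,N_S}, B ⊆ {1,…,N_S} and D_1, …, D_L ⊆ {1,…,N_R}. Let A = A_1 ∪ ⋯ ∪ A_L, m = |A|, m_D = |B|, m_RD = |A ∩ B| and m' = ∑_{j=1}^{L} |D_j|. Let C be a uniformly random N_S×K matrix over F_q and, independently, let G_j be a uniformly random N_R×|A_j| matrix over F_q for each j. Let C_D be the vertical stack of C_B (the rows of C indexed by B) and, for each j, (G_j)_{D_j} · C_{A_j} (the rows of G_j indexed by D_j times the rows of C indexed by A_j, columns of G_j matched to the elements of A_j in order). Then Pr[rank(C_D) = K] ≤ P2((m' + m_D, m − m_RD + m_D, m_D), K). -/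
open Finset

/-- The Gaussian binomial coefficient `[K; r]_q`. -/
noncomputable def gaussBinom (q K r : ℕ) : ℝ :=
  ∏ i ∈ Finset.range r, (((q : ℝ) ^ (K - i) - 1) / ((q : ℝ) ^ (r - i) - 1))

/-- `P_r(m,K) = q^{-m(K-r)} · [K; r]_q · ∏_{i=0}^{r-1} (1 - q^{i-m})`. -/
noncomputable def Prk (q m K r : ℕ) : ℝ :=
  (q : ℝ) ^ (-(m : ℤ) * ((K : ℤ) - (r : ℤ))) * gaussBinom q K r *
    ∏ i ∈ Finset.range r, (1 - (q : ℝ) ^ ((i : ℤ) - (m : ℤ)))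

/-- `P2((m1,m2,m12),K)`; the lower bound `max(0, K-m1+m12, K-m2+m12)` is expressed
with truncated natural subtraction. -/
noncomputable def P2 (q K m1 m2 m12 : ℕ) : ℝ :=
  ∑ i ∈ Finset.Icc (max (K + m12 - m1) (K + m12 - m2)) (min m12 K),
    Prk q m12 K i * Pfr q (m1 - m12) (K - i) * Pfr q (m2 - m12) (K - i)

/-!
Reveal the uniform vectors one at a time and follow the codimension `c` of the subspace they span.
A new uniform vector lies in the current span with probability `q ^ (-c)`, and otherwise lowers `c`
by one; if it is only uniform on some subspace, it is at least as likely to lie in the span. Hence,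
for antitone `h`, the expectation of `h` at the final codimension is at most the value of the
corresponding Markov chain, whose transition probabilities are the `Prk`.

The span of the destination's rows lies in the span of the source rows indexed by `A ∪ B`. Let `c`
be the codimension of the span of the rows in `B`. Conditionally on those rows, the rows in `A \ B`
complete the span with probability at most `Pfr q |A \ B| c`, and, given all source rows, the `m'`
relayed rows complete it with probability at most `Pfr q m' c`. The product of the two is antitone
in `c`, and averaging it over the rows in `B` gives `P2`.
-/

section RankProbabilities

variable {q : ℕ}

lemma pfr_succ_right (q m K : ℕ) :
    Pfr q m (K + 1) = Pfr q m K * (1 - (q : ℝ) ^ ((K : ℤ) - (m : ℤ))) :=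
  prod_range_succ _ K

lemma pfr_succ_succ (q m K : ℕ) :
    Pfr q (m + 1) (K + 1) = (1 - (q : ℝ) ^ (-((m : ℤ) + 1))) * Pfr q m K := by
  simp only [Pfr, prod_range_succ' _ K, Nat.cast_add, Nat.cast_one, Nat.cast_zero, zero_sub,
    add_sub_add_right_eq_sub, mul_comm]

lemma pfr_eq_zero {m K : ℕ} (h : m < K) : Pfr q m K = 0 :=
  prod_eq_zero (mem_range.2 h) (by simp)

lemma pfr_nonneg (hq : 1 ≤ q) (m K : ℕ) : 0 ≤ Pfr q m K := by
  rcases lt_or_ge m K with h | h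
  · rw [pfr_eq_zero h]
  · refine prod_nonneg fun i hi => sub_nonneg.2 ?_
    have hiK := mem_range.1 hi
    exact zpow_le_one_of_nonpos₀ (by exact_mod_cast hq) (by omega)

lemma pfr_antitone (hq : 1 ≤ q) (m : ℕ) : Antitone (Pfr q m) := by
  refine antitone_nat_of_succ_le fun K => ?_
  rw [pfr_succ_right]
  exact mul_le_of_le_one_right (pfr_nonneg hq m K) (sub_le_self 1 (by positivity))

lemma gaussBinom_succ_succ (q K r : ℕ) :
    gaussBinom q (K + 1) (r + 1) =
      gaussBinom q K r * (((q : ℝ) ^ (K + 1) - 1) / ((q : ℝ) ^ (r + 1) - 1)) := by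
  simp only [gaussBinom, prod_range_succ' _ r, Nat.add_sub_add_right, Nat.sub_zero]

lemma gaussBinom_self (hq : 1 < q) (K : ℕ) : gaussBinom q K K = 1 := by
  refine prod_eq_one fun i hi => div_self ?_
  have hiK := mem_range.1 hi
  exact (sub_pos.2 (one_lt_pow₀ (by exact_mod_cast hq) (by omega))).ne'

lemma prk_eq_mul_pfr (q m K r : ℕ) : Prk q m K r =
    (q : ℝ) ^ (-(m : ℤ) * ((K : ℤ) - (r : ℤ))) * gaussBinom q K r * Pfr q m r := rfl

lemma prk_eq_zero {m r : ℕ} (K : ℕ) (h : m < r) : Prk q m K r = 0 := by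
  rw [prk_eq_mul_pfr, pfr_eq_zero h, mul_zero]

lemma prk_zero_right (q m K : ℕ) : Prk q m K 0 = ((q : ℝ) ^ K)⁻¹ ^ m := by
  simp [Prk, gaussBinom, zpow_mul, inv_pow, ← pow_mul, mul_comm]

lemma prk_self (hq : 1 < q) (m K : ℕ) : Prk q m K K = Pfr q m K := by
  simp [prk_eq_mul_pfr, gaussBinom_self hq]

lemma prk_succ_succ (q m K r : ℕ) :
    Prk q m (K + 1) (r + 1) = Prk q m K r *
      (((q : ℝ) ^ (K + 1) - 1) / ((q : ℝ) ^ (r + 1) - 1) *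
        (1 - (q : ℝ) ^ ((r : ℤ) - (m : ℤ)))) := by
  simp only [prk_eq_mul_pfr, gaussBinom_succ_succ, pfr_succ_right, Nat.cast_add, Nat.cast_one,
    add_sub_add_right_eq_sub]
  ring

lemma prk_succ_succ_succ (hq : q ≠ 0) (m K r : ℕ) :
    Prk q (m + 1) (K + 1) (r + 1) = Prk q m K r *
      (((q : ℝ) ^ (K + 1) - 1) / ((q : ℝ) ^ (r + 1) - 1) *
        ((q : ℝ) ^ ((r : ℤ) - (K : ℤ)) * (1 - (q : ℝ) ^ (-((m : ℤ) + 1))))) := by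
  have hpow : (q : ℝ) ^ (-((m : ℤ) + 1) * ((K : ℤ) - (r : ℤ))) =
      (q : ℝ) ^ (-(m : ℤ) * ((K : ℤ) - (r : ℤ))) * (q : ℝ) ^ ((r : ℤ) - (K : ℤ)) := by
    rw [← zpow_add₀ (by exact_mod_cast hq)]
    ring_nf
  simp only [prk_eq_mul_pfr, gaussBinom_succ_succ, pfr_succ_succ, Nat.cast_add, Nat.cast_one,
    add_sub_add_right_eq_sub, hpow]
  ring

lemma prk_pascal (hq : 1 < q) (m K r : ℕ) :
    Prk q (m + 1) (K + 1) (r + 1) = ((q : ℝ) ^ (K + 1))⁻¹ * Prk q m (K + 1) (r + 1) +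
      (1 - ((q : ℝ) ^ (K + 1))⁻¹) * Prk q m K r := by
  have hq0 : (q : ℝ) ≠ 0 := by positivity
  have hr : (q : ℝ) ^ (r + 1) - 1 ≠ 0 :=
    (sub_pos.2 (one_lt_pow₀ (by exact_mod_cast hq) r.succ_ne_zero)).ne'
  have hfactor : ((q : ℝ) ^ (K + 1) - 1) / ((q : ℝ) ^ (r + 1) - 1) *
        ((q : ℝ) ^ ((r : ℤ) - (K : ℤ)) * (1 - (q : ℝ) ^ (-((m : ℤ) + 1)))) =
      ((q : ℝ) ^ (K + 1))⁻¹ * (((q : ℝ) ^ (K + 1) - 1) / ((q : ℝ) ^ (r + 1) - 1) *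
        (1 - (q : ℝ) ^ ((r : ℤ) - (m : ℤ)))) + (1 - ((q : ℝ) ^ (K + 1))⁻¹) := by
    simp only [zpow_sub₀ hq0, zpow_neg, zpow_add₀ hq0, zpow_natCast, zpow_one]
    field_simp
    ring
  rw [prk_succ_succ_succ (by omega), prk_succ_succ, hfactor]
  ring

end RankProbabilities

section CodimensionChain

variable {q : ℕ} {h : ℕ → ℝ}

/-- The transition operator of the codimension chain: the expected value of `h` at the codimension
left after adjoining a uniform vector to a subspace of codimension `c` over a field with `q`
elements. At `c = 0` the truncated `c - 1` carries weight zero. -/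
noncomputable def codimStep (q : ℕ) (h : ℕ → ℝ) (c : ℕ) : ℝ :=
  ((q : ℝ) ^ c)⁻¹ * h c + (1 - ((q : ℝ) ^ c)⁻¹) * h (c - 1)

lemma inv_natCast_pow_le_one (hq : 1 ≤ q) (c : ℕ) : ((q : ℝ) ^ c)⁻¹ ≤ 1 :=
  inv_le_one_of_one_le₀ (one_le_pow₀ (by exact_mod_cast hq))

lemma le_codimStep (hq : 1 ≤ q) (hh : Antitone h) (c : ℕ) : h c ≤ codimStep q h c := by
  have hstep := mul_le_mul_of_nonneg_left (hh c.pred_le)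
    (sub_nonneg.2 (inv_natCast_pow_le_one hq c))
  rw [Nat.pred_eq_sub_one] at hstep
  rw [codimStep]
  linarith

lemma codimStep_le (hh : Antitone h) (c : ℕ) : codimStep q h c ≤ h (c - 1) := by
  have hstep := mul_le_mul_of_nonneg_left (hh (Nat.sub_le c 1))
    (by positivity : 0 ≤ ((q : ℝ) ^ c)⁻¹)
  rw [codimStep]
  linarith

lemma codimStep_antitone (hq : 1 ≤ q) (hh : Antitone h) : Antitone (codimStep q h) :=
  antitone_nat_of_succ_le fun c => (codimStep_le hh (c + 1)).trans (le_codimStep hq hh c)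

lemma iterate_codimStep_antitone (hq : 1 ≤ q) (hh : Antitone h) (m : ℕ) :
    Antitone ((codimStep q)^[m] h) :=
  Function.Iterate.rec Antitone hh (fun _ => codimStep_antitone hq) m

lemma iterate_codimStep_eq_sum (hq : 1 < q) (h : ℕ → ℝ) (m c : ℕ) :
    (codimStep q)^[m] h c = ∑ i ∈ range (c + 1), Prk q m c i * h (c - i) := by
  induction m generalizing c with
  | zero =>
    rw [Function.iterate_zero_apply, sum_range_succ', sum_eq_zero fun i _ => by
      rw [prk_eq_zero _ i.succ_pos, zero_mul]]
    simp [prk_zero_right]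
  | succ m ih =>
    rw [Function.iterate_succ_apply', codimStep, ih, ih]
    cases c with
    | zero => simp [prk_zero_right]
    | succ c =>
      simp only [sum_range_succ' _ (c + 1), prk_pascal hq, prk_zero_right, pow_succ _ m, add_mul,
        mul_add, sum_add_distrib, mul_sum, Nat.add_sub_add_right, Nat.add_sub_cancel, mul_assoc]
      ring

lemma iterate_codimStep_ite_eq_zero (hq : 1 < q) (m c : ℕ) :
    (codimStep q)^[m] (fun c => if c = 0 then 1 else 0) c = Pfr q m c := by
  rw [iterate_codimStep_eq_sum hq, sum_range_succ, sum_eq_zero fun i hi => by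
    rw [if_neg (Nat.sub_ne_zero_of_lt (mem_range.1 hi)), mul_zero]]
  simp [prk_self hq]

lemma p2_eq_iterate_codimStep (hq : 1 < q) (K m n b : ℕ) :
    P2 q K (m + b) (n + b) b = (codimStep q)^[b] (fun c => Pfr q m c * Pfr q n c) K := by
  rw [iterate_codimStep_eq_sum hq, P2]
  simp only [Nat.add_sub_cancel, mul_assoc]
  refine sum_subset (fun i hi => ?_) fun i hi hi' => ?_
  · have := mem_Icc.1 hi
    exact mem_range.2 (by omega)
  · have hcases : b < i ∨ m < K - i ∨ n < K - i := by
      simp only [mem_Icc, mem_range] at hi hi'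
      omega
    rcases hcases with hb | hm | hn
    · rw [prk_eq_zero _ hb, zero_mul]
    · rw [pfr_eq_zero hm, zero_mul, mul_zero]
    · rw [pfr_eq_zero hn, mul_zero, mul_zero]

end CodimensionChain

section UniformProbability

open scoped BigOperators

variable {α β : Type*} [Fintype α] [Fintype β]

open scoped Classical in
/-- The probability that a uniformly random element of the finite type `α` satisfies `p`. -/
noncomputable def uniformProb (p : α → Prop) : ℝ :=
  𝔼 x, if p x then 1 else 0

lemma uniformProb_eq_expect (p : α → Prop) [DecidablePred p] :
    uniformProb p = 𝔼 x, if p x then 1 else 0 := by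
  rw [uniformProb]
  congr!

lemma uniformProb_eq_card_div_card (p : α → Prop) [DecidablePred p] :
    uniformProb p = #{x | p x} / Fintype.card α := by
  rw [uniformProb_eq_expect, Fintype.expect_eq_sum_div_card, sum_boole]

lemma uniformProb_prod (p : α × β → Prop) :
    uniformProb p = 𝔼 x, uniformProb fun y => p (x, y) :=
  expect_product _ _ _

lemma uniformProb_comp_equiv (e : α ≃ β) (p : β → Prop) :
    uniformProb (fun x => p (e x)) = uniformProb p :=
  Fintype.expect_equiv e _ _ fun _ => rfl

lemma uniformProb_eq_zero {p : α → Prop} (hp : ∀ x, ¬ p x) : uniformProb p = 0 :=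
  expect_eq_zero fun x _ => if_neg (hp x)

lemma inv_index_le_uniformProb_mem {G H : Type*} [AddGroup G] [AddGroup H] [Fintype G]
    (f : G →+ H) (S : AddSubgroup H) [S.FiniteIndex] :
    (S.index : ℝ)⁻¹ ≤ uniformProb fun x => f x ∈ S := by
  classical
  have hindex : (S.comap f).index ≤ S.index := by
    rw [AddSubgroup.index_comap, ← S.relIndex_top_right]
    exact AddSubgroup.relIndex_le_of_le_right le_top (by simpa using S.index_ne_zero_of_finite)
  have hcard : #{x | f x ∈ S} * (S.comap f).index = Fintype.card G := by
    rw [← Nat.card_eq_fintype_card, ← (S.comap f).card_mul_index, ← Fintype.card_subtype,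
      ← Nat.card_eq_fintype_card]
    rfl
  rw [uniformProb_eq_card_div_card, inv_eq_one_div,
    div_le_div_iff₀ (by exact_mod_cast Nat.pos_of_ne_zero S.index_ne_zero_of_finite)
      (by exact_mod_cast Fintype.card_pos), one_mul]
  exact_mod_cast hcard ▸ Nat.mul_le_mul_left _ hindex

/-- Independence of the coordinates: the arguments of `f` read disjoint sets of coordinates of a
uniform point, so they may be drawn separately. -/
lemma expect_eq_expect_expect_of_dependsOn {ι : Type*} [Fintype ι] [DecidableEq ι] {E : ι → Type*}
    [∀ i, Fintype (E i)] [∀ i, Nonempty (E i)] {f : (∀ i, E i) → (∀ i, E i) → ℝ} {s t : Finset ι}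
    (hst : Disjoint s t) (hs : ∀ y, DependsOn (fun x => f x y) s) (ht : ∀ x, DependsOn (f x) t) :
    𝔼 x, f x x = 𝔼 x, 𝔼 y, f x y := by
  have hswap : Function.Involutive fun p : (∀ i, E i) × (∀ i, E i) =>
      (t.piecewise p.2 p.1, t.piecewise p.1 p.2) := by
    intro p
    ext i <;> by_cases hi : i ∈ t <;> simp [hi]
  have hf : ∀ x y, f x x = f (t.piecewise y x) (t.piecewise x y) := fun x y => by
    have hfst : f (t.piecewise y x) (t.piecewise x y) = f x (t.piecewise x y) :=
      hs _ fun i hi => t.piecewise_eq_of_notMem y x (disjoint_left.1 hst hi)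
    have hsnd : f x (t.piecewise x y) = f x x :=
      ht x fun i hi => t.piecewise_eq_of_mem x y hi
    rw [hfst, hsnd]
  calc 𝔼 x, f x x = 𝔼 x, 𝔼 _y : (∀ i, E i), f x x := by simp only [Fintype.expect_const]
    _ = 𝔼 p : (∀ i, E i) × (∀ i, E i), f p.1 p.1 := by
      rw [← univ_product_univ, expect_product]
    _ = 𝔼 p : (∀ i, E i) × (∀ i, E i), f p.1 p.2 :=
      Fintype.expect_equiv hswap.toPerm _ _ fun p => hf p.1 p.2
    _ = 𝔼 x, 𝔼 y, f x y := by
      rw [← univ_product_univ, expect_product]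

end UniformProbability

section RandomSpan

open scoped BigOperators
open Module Submodule

variable {F U : Type*} [Field F] [AddCommGroup U] [Module F U]

/-- The codimension of a subspace. Stating it through `finrank` gives the junk value `0` when the
quotient is infinite-dimensional. -/
noncomputable def codim (S : Submodule F U) : ℕ :=
  finrank F (U ⧸ S)

lemma codim_bot : codim (⊥ : Submodule F U) = finrank F U :=
  (quotEquivOfEqBot ⊥ rfl).finrank_eq

variable [FiniteDimensional F U]

lemma codim_sub_one_le_codim_sup_span_singleton (S : Submodule F U) (v : U) :
    codim S - 1 ≤ codim (S ⊔ span F {v}) := by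
  have hv : finrank F (span F {v}) ≤ 1 := by
    simpa using finrank_span_le_card (R := F) ({v} : Set U)
  have hsup := finrank_add_le_finrank_add_finrank S (span F {v})
  simp only [codim, finrank_quotient]
  omega

lemma codim_eq_zero_iff {S : Submodule F U} : codim S = 0 ↔ S = ⊤ := by
  rw [codim, finrank_zero_iff, Submodule.Quotient.subsingleton_iff]

variable [Fintype F] {ι : Type*} {E : ι → Type*} [∀ i, AddCommGroup (E i)] [∀ i, Module F (E i)]

lemma inv_pow_codim_le_uniformProb_mem {M : Type*} [AddCommGroup M] [Module F M]
    [Fintype M] (φ : M →ₗ[F] U) (S : Submodule F U) :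
    ((Fintype.card F : ℝ) ^ codim S)⁻¹ ≤ uniformProb fun x => φ x ∈ S := by
  have : Finite U := Module.finite_of_finite F
  have hcard : S.toAddSubgroup.index = Fintype.card F ^ codim S :=
    calc S.toAddSubgroup.index = Nat.card (U ⧸ S) := rfl
      _ = Fintype.card F ^ codim S := by
        rw [natCard_eq_pow_finrank (K := F), Nat.card_eq_fintype_card, codim]
  have hle := inv_index_le_uniformProb_mem φ.toAddMonoidHom S.toAddSubgroup
  rw [hcard] at hle
  exact_mod_cast hle

lemma expect_codim_sup_span_singleton_le {M : Type*} [AddCommGroup M] [Module F M]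
    [Fintype M] (φ : M →ₗ[F] U) (S : Submodule F U) {h : ℕ → ℝ} (hh : Antitone h) :
    𝔼 x, h (codim (S ⊔ span F {φ x})) ≤
      codimStep (Fintype.card F) h (codim S) := by
  classical
  have hmem := inv_pow_codim_le_uniformProb_mem φ S
  set c := codim S with hc
  have hpoint : ∀ x, h (codim (S ⊔ span F {φ x})) ≤
      h (c - 1) - (if φ x ∈ S then 1 else 0) * (h (c - 1) - h c) := fun x => by
    split_ifs with hx
    · rw [sup_of_le_left ((span_singleton_le_iff_mem _ _).2 hx), ← hc]
      linarith
    · rw [zero_mul, sub_zero]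
      exact hh (codim_sub_one_le_codim_sup_span_singleton S (φ x))
  calc 𝔼 x, h (codim (S ⊔ span F {φ x}))
      ≤ 𝔼 x, (h (c - 1) - (if φ x ∈ S then 1 else 0) * (h (c - 1) - h c)) :=
        expect_le_expect fun x _ => hpoint x
    _ = h (c - 1) - (uniformProb fun x => φ x ∈ S) * (h (c - 1) - h c) := by
        rw [expect_sub_distrib, Fintype.expect_const, ← expect_mul, uniformProb]
    _ ≤ h (c - 1) - ((Fintype.card F : ℝ) ^ c)⁻¹ * (h (c - 1) - h c) := by
        gcongr
        exact sub_nonneg.2 (hh (Nat.sub_le c 1))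
    _ = codimStep (Fintype.card F) h c := by rw [codimStep]; ring

variable [Fintype ι] [DecidableEq ι] [∀ i, Fintype (E i)]

lemma expect_codim_sup_span_image_le (φ : ∀ i, E i →ₗ[F] U) {h : ℕ → ℝ}
    (hh : Antitone h) (s : Finset ι) (S : Submodule F U) :
    𝔼 x : ∀ i, E i, h (codim (S ⊔ span F ((fun i => φ i (x i)) '' s))) ≤
      (codimStep (Fintype.card F))^[#s] h (codim S) := by
  induction s using Finset.induction_on generalizing S with
  | empty => simp
  | insert a s ha ih =>
    have hsplit : ∀ x : ∀ i, E i, S ⊔ span F ((fun i => φ i (x i)) '' ↑(insert a s)) =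
        (S ⊔ span F {φ a (x a)}) ⊔ span F ((fun i => φ i (x i)) '' s) := fun x => by
      rw [coe_insert, Set.image_insert_eq, span_insert, sup_assoc]
    calc 𝔼 x : ∀ i, E i, h (codim (S ⊔ span F ((fun i => φ i (x i)) '' ↑(insert a s))))
        = 𝔼 y : ∀ i, E i, 𝔼 x : ∀ i, E i,
            h (codim ((S ⊔ span F {φ a (x a)}) ⊔ span F ((fun i => φ i (y i)) '' s))) := by
          simp only [hsplit]
          exact expect_eq_expect_expect_of_dependsOn (f := fun y x =>
              h (codim ((S ⊔ span F {φ a (x a)}) ⊔ span F ((fun i => φ i (y i)) '' s))))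
            (disjoint_singleton_right.2 ha)
            (fun x y y' hy => by
              simp only [Set.image_congr fun i hi => congrArg (φ i) (hy i hi)])
            (fun y x x' hx => by simp only [hx a (mem_singleton_self a)])
      _ ≤ 𝔼 x : ∀ i, E i, (codimStep (Fintype.card F))^[#s] h (codim (S ⊔ span F {φ a (x a)})) := by
          rw [expect_comm]
          exact expect_le_expect fun x _ => ih (S ⊔ span F {φ a (x a)})
      _ ≤ (codimStep (Fintype.card F))^[#(insert a s)] h (codim S) := by
          rw [card_insert_of_notMem ha, Function.iterate_succ_apply']
          exact expect_codim_sup_span_singleton_le (φ a ∘ₗ LinearMap.proj a) S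
            (iterate_codimStep_antitone Fintype.card_pos hh #s)

lemma uniformProb_sup_span_image_eq_top_le (φ : ∀ i, E i →ₗ[F] U) (s : Finset ι)
    (S : Submodule F U) :
    (uniformProb fun x : ∀ i, E i => S ⊔ span F ((fun i => φ i (x i)) '' s) = ⊤) ≤
      Pfr (Fintype.card F) #s (codim S) := by
  have hanti : Antitone fun c : ℕ => if c = 0 then (1 : ℝ) else 0 :=
    antitone_nat_of_succ_le fun c => by split_ifs <;> simp_all
  rw [← iterate_codimStep_ite_eq_zero Fintype.one_lt_card]
  simp only [← codim_eq_zero_iff, uniformProb_eq_expect]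
  exact expect_codim_sup_span_image_le φ hanti s S

lemma uniformProb_sup_span_image_eq_top_le_mul_ite (φ : ∀ i, E i →ₗ[F] U) {s : Finset ι}
    {S T : Submodule F U} [Decidable (T = ⊤)] (hST : S ≤ T) (hφ : ∀ i ∈ s, ∀ x, φ i x ∈ T) :
    (uniformProb fun x : ∀ i, E i => S ⊔ span F ((fun i => φ i (x i)) '' s) = ⊤) ≤
      Pfr (Fintype.card F) #s (codim S) * if T = ⊤ then 1 else 0 := by
  split_ifs with hT
  · rw [mul_one]
    exact uniformProb_sup_span_image_eq_top_le φ s S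
  · rw [mul_zero]
    refine (uniformProb_eq_zero fun x hx => hT (top_le_iff.1 (hx.ge.trans ?_))).le
    exact sup_le hST (span_le.2 (Set.image_subset_iff.2 fun i hi => hφ i hi (x i)))

omit [FiniteDimensional F U] in
lemma expect_pfr_mul_pfr_codim_le [Fintype U] (m n : ℕ) (B : Finset ι) :
    𝔼 v : ι → U, Pfr (Fintype.card F) m (codim (span F (v '' B))) *
        Pfr (Fintype.card F) n (codim (span F (v '' B))) ≤
      P2 (Fintype.card F) (finrank F U) (m + #B) (n + #B) #B := by
  have hq : 1 ≤ Fintype.card F := Fintype.card_pos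
  have hanti : Antitone fun c => Pfr (Fintype.card F) m c * Pfr (Fintype.card F) n c :=
    fun a b hab => mul_le_mul (pfr_antitone hq m hab) (pfr_antitone hq n hab) (pfr_nonneg hq n b)
      (pfr_nonneg hq m a)
  have hchain := expect_codim_sup_span_image_le (fun _ : ι => LinearMap.id (R := F) (M := U))
    hanti B ⊥
  simpa only [bot_sup_eq, LinearMap.id_apply, codim_bot,
    ← p2_eq_iterate_codimStep Fintype.one_lt_card] using hchain

omit [FiniteDimensional F U] in
lemma expect_uniformProb_span_image_sup_eq_top_le [Fintype U] {σ : Type*} [Fintype σ]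
    [DecidableEq σ] (A : ι → Finset σ) {B R : Finset σ} (hBR : Disjoint B R) {s : Finset ι}
    (hA : ∀ p ∈ s, A p ⊆ B ∪ R) :
    𝔼 v : σ → U, (uniformProb fun g : ∀ p, A p → F => span F (v '' B) ⊔
        span F ((fun p => Fintype.linearCombination F (fun i : A p => v i) (g p)) '' s) = ⊤) ≤
      P2 (Fintype.card F) (finrank F U) (#s + #B) (#R + #B) #B := by
  classical
  let P (m : ℕ) (v : σ → U) : ℝ := Pfr (Fintype.card F) m (codim (span F (v '' B)))
  have hrelay : ∀ v : σ → U, (uniformProb fun g : ∀ p, A p → F => span F (v '' B) ⊔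
        span F ((fun p => Fintype.linearCombination F (fun i : A p => v i) (g p)) '' s) = ⊤) ≤
      P #s v * if span F (v '' B) ⊔ span F (v '' R) = ⊤ then 1 else 0 := fun v => by
    refine uniformProb_sup_span_image_eq_top_le_mul_ite
      (fun p => Fintype.linearCombination F fun i : A p => v i) le_sup_left fun p hp g => ?_
    rw [← span_union, ← Set.image_union, ← coe_union, Fintype.linearCombination_apply]
    exact sum_mem fun i _ => smul_mem _ _ (subset_span (Set.mem_image_of_mem v (hA p hp i.2)))
  calc _ ≤ 𝔼 v : σ → U, P #s v * if span F (v '' B) ⊔ span F (v '' R) = ⊤ then 1 else 0 :=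
        expect_le_expect fun v _ => hrelay v
    _ = 𝔼 v : σ → U, 𝔼 w : σ → U,
          P #s v * if span F (v '' B) ⊔ span F (w '' R) = ⊤ then 1 else 0 :=
        expect_eq_expect_expect_of_dependsOn (f := fun v w : σ → U =>
            P #s v * if span F (v '' B) ⊔ span F (w '' R) = ⊤ then 1 else 0) hBR
          (fun w v v' hv => by simp only [P, Set.image_congr hv])
          (fun v w w' hw => by simp only [Set.image_congr hw])
    _ = 𝔼 v : σ → U, P #s v *
          uniformProb fun w : σ → U => span F (v '' B) ⊔ span F (w '' R) = ⊤ := by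
        simp only [← mul_expect, uniformProb_eq_expect]
    _ ≤ 𝔼 v : σ → U, P #s v * P #R v := by
        gcongr with v
        · exact pfr_nonneg Fintype.card_pos _ _
        · exact uniformProb_sup_span_image_eq_top_le
            (fun _ : σ => LinearMap.id (R := F) (M := U)) R (span F (v '' B))
    _ ≤ P2 (Fintype.card F) (finrank F U) (#s + #B) (#R + #B) #B :=
        expect_pfr_mul_pfr_codim_le #s #R B

end RandomSpan

section ReceivedMatrix

open scoped BigOperators
open Module Submodule

variable {F σ κ ι : Type*} {ρ : ι → Type*} [Field F]

/-- The matrix `C_D` received by the destination: the rows of `C` indexed by `B`, stacked on the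
rows indexed by `D j` of the products `G j * C_{A j}`. -/
def receivedMatrix (A : ι → Finset σ) (B : Finset σ) (D : ∀ j, Finset (ρ j)) (C : Matrix σ κ F)
    (G : ∀ j, Matrix (ρ j) (A j) F) : Matrix (B ⊕ Σ j, D j) κ F :=
  Matrix.fromRows (C.submatrix Subtype.val id)
    (Matrix.of fun p => (G p.1 * C.submatrix Subtype.val id).row p.2)

lemma rank_eq_card_iff_span_range_row [Fintype κ] {μ : Type*} [Finite μ] (M : Matrix μ κ F) :
    M.rank = Fintype.card κ ↔ span F (Set.range M.row) = ⊤ := by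
  rw [Matrix.rank_eq_finrank_span_row, ← finrank_fintype_fun_eq_card F (η := κ)]
  exact ⟨eq_top_of_finrank_eq, fun h => by rw [h, finrank_top]⟩

variable [Fintype ι]

lemma span_range_row_receivedMatrix (A : ι → Finset σ) (B : Finset σ) (D : ∀ j, Finset (ρ j))
    (C : Matrix σ κ F) (G : ∀ j, Matrix (ρ j) (A j) F) :
    span F (Set.range (receivedMatrix A B D C G).row) = span F (C.row '' B) ⊔
      span F ((fun p : Σ j, ρ j => Fintype.linearCombination F (fun i : A p.1 => C.row i)
        (G p.1 p.2)) '' univ.sigma D) := by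
  have hsource : C.row '' B = Set.range (C.submatrix (Subtype.val : B → σ) id).row :=
    Set.image_eq_range _ _
  have hrelay : (fun p : Σ j, ρ j => Fintype.linearCombination F (fun i : A p.1 => C.row i)
      (G p.1 p.2)) '' univ.sigma D = Set.range fun p : Σ j, D j =>
        (G p.1 * C.submatrix (Subtype.val : A p.1 → σ) id).row p.2 := by
    have hrow (j t) : Fintype.linearCombination F (fun i : A j => C.row i) (G j t) =
        (G j * C.submatrix (Subtype.val : A j → σ) id).row t := by
      ext k
      simp [Fintype.linearCombination_apply, Matrix.mul_apply]
    ext x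
    constructor
    · rintro ⟨⟨j, t⟩, ht, rfl⟩
      exact ⟨⟨j, t, (mem_sigma.1 ht).2⟩, (hrow j t).symm⟩
    · rintro ⟨⟨j, t⟩, rfl⟩
      exact ⟨⟨j, t⟩, mem_sigma.2 ⟨mem_univ j, t.2⟩, hrow j t⟩
  rw [hsource, hrelay, ← span_union, ← Set.Sum.elim_range]
  rfl

theorem fixed_sets_rank_bound_general [Fintype F] [Fintype σ] [DecidableEq σ] [Fintype κ]
    [DecidableEq κ] [DecidableEq ι] [∀ j, Fintype (ρ j)] [∀ j, DecidableEq (ρ j)]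
    (A : ι → Finset σ) (B : Finset σ) (D : ∀ j, Finset (ρ j)) :
    (uniformProb fun ω : Matrix σ κ F × (∀ j, Matrix (ρ j) (A j) F) =>
        (receivedMatrix A B D ω.1 ω.2).rank = Fintype.card κ) ≤
      P2 (Fintype.card F) (Fintype.card κ) (∑ j, #(D j) + #B)
        (#(univ.biUnion A) - #(univ.biUnion A ∩ B) + #B) #B := by
  classical
  have hcard : #(univ.biUnion A) - #(univ.biUnion A ∩ B) = #(univ.biUnion A \ B) := by
    rw [card_sdiff, inter_comm]
  have hbound := expect_uniformProb_span_image_sup_eq_top_le (F := F) (U := κ → F)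
    (fun p : Σ j, ρ j => A p.1) (disjoint_sdiff (s := B) (t := univ.biUnion A))
    (s := univ.sigma D) fun p _ => by
      rw [union_sdiff_self_eq_union]
      exact (subset_biUnion_of_mem A (mem_univ p.1)).trans subset_union_right
  rw [card_sigma, finrank_fintype_fun_eq_card, ← hcard] at hbound
  rw [uniformProb_prod]
  refine (expect_congr rfl fun C _ => ?_).trans_le hbound
  simp only [rank_eq_card_iff_span_range_row, span_range_row_receivedMatrix]
  exact (uniformProb_comp_equiv (Equiv.piCurry fun j (_ : ρ j) => A j → F) _).symm

end ReceivedMatrix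

/-- fixed reception sets `A j` (relays, from the source), `B`
(destination, from the source) and `D j` (destination, from relay `j`). `C` is a
uniformly random `N_S × K` matrix and each `G j` an independent uniformly random
`N_R × |A j|` matrix (columns indexed by the elements of `A j`). The destination
matrix `C_D` stacks `C_B` and the matrices `(G j)_{D j} · C_{A j}`. Then
`Pr[rank C_D = K] ≤ P2((m' + m_D, m - m_RD + m_D, m_D), K)` where
`m = |⋃ A j|`, `m_D = |B|`, `m_RD = |(⋃ A j) ∩ B|`, `m' = ∑ j |D j|`. -/
theorem fixed_sets_rank_bound (q : ℕ) (F : Type) [Field F] [Fintype F] [DecidableEq F]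
    (hF : Fintype.card F = q) (K NS NR L : ℕ) (hK : 1 ≤ K) (hL : 1 ≤ L)
    (A : Fin L → Finset (Fin NS)) (B : Finset (Fin NS)) (D : Fin L → Finset (Fin NR)) :
    ((Finset.univ.filter
        (fun ω : Matrix (Fin NS) (Fin K) F ×
            ((j : Fin L) → Matrix (Fin NR) {i : Fin NS // i ∈ A j} F) =>
          (Matrix.of (Sum.elim
              (fun (i : {i : Fin NS // i ∈ B}) (k : Fin K) => ω.1 i.1 k)
              (fun (p : Σ j : Fin L, {t : Fin NR // t ∈ D j}) (k : Fin K) =>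
                ∑ i : {i : Fin NS // i ∈ A p.1},
                  ω.2 p.1 p.2.1 i * ω.1 i.1 k))).rank = K)).card : ℝ) /
      (Fintype.card (Matrix (Fin NS) (Fin K) F ×
        ((j : Fin L) → Matrix (Fin NR) {i : Fin NS // i ∈ A j} F)) : ℝ) ≤
    P2 q K ((∑ j, (D j).card) + B.card)
      ((Finset.univ.biUnion A).card - ((Finset.univ.biUnion A) ∩ B).card + B.card)
      B.card := by
  subst hF
  have hbound := fixed_sets_rank_bound_general (F := F) (κ := Fin K) A B D
  rw [uniformProb_eq_card_div_card, Fintype.card_fin] at hbound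
  exact hbound
end
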